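/- arXiv:1701.00768 — 3 statements merged into one kernel-verified Lean document; each statement's English description precedes it below -/
import Mathlib

section
/- Let L be a Lie algebra over a field K. Then the universal enveloping algebra U(L) is a principal ideal ring if and only if L is either zero or one-dimensional (i.e. dim_K L ≤ 1). -/
/-!
The substance is the implication from `IsPrincipalIdealRing (U L)` to `dim L ≤ 1`, and it rests on
the Poincaré–Birkhoff–Witt theorem, in the form: the graded ring of `U L` for its standard
filtration `U₀ ⊆ U₁ ⊆ ⋯` is a polynomial ring, hence a domain.

Granting this, let the augmentation ideal, as a left ideal, be generated by `a`. Every `x ∈ L` is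
`u * a` for some `u`. Degrees add up under multiplication, and `a` is not a scalar, so for `x ≠ 0`
the element `a` has degree `1` and `u` is a scalar. Thus `L ⊆ K a`, so `dim L ≤ 1`
(`PBW.exists_lin_eq_smul`). Conversely, if `L` is spanned by one vector, then `U L` is a quotient
of `K[X]`.

The PBW theorem is obtained as follows. Fix a basis `b` of `L` indexed by a linear order `I`.
There is a representation `PBW.act` of `L` on `MvPolynomial I K` in which `x` acts as
multiplication by the corresponding linear form, up to terms of no higher degree than the argument
(`PBW.act_sub_mem`). It is forced by the rule that `b i` multiplies a monomial by `X i` when `i` is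
at most all of its indices, and `PBW.act_comm` checks the bracket relation, by induction on the
degree, the Jacobi identity settling the only nontrivial case. Applying `u ∈ Uₙ` to `1` and keeping
the component of degree `n` gives the symbol `PBW.symb b n u`. Symbols are multiplicative
(`PBW.symb_mul`), and one that vanishes lowers the filtration degree
(`PBW.sub_sec_symb`), since a product of `n` elements of `L` depends on their order only modulo
`Uₙ₋₁`.
-/

set_option linter.unusedSectionVars false

namespace PBW

open MvPolynomial

noncomputable section

variable {K L I : Type*} [Field K] [LieRing L] [LieAlgebra K L] [LinearOrder I]

/-! ### Monomials and the degree filtration of the polynomial ring -/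

/-- The monomial with exponent vector `s`. -/
abbrev mon (K : Type*) [Field K] {I : Type*} (s : I →₀ ℕ) : MvPolynomial I K := monomial s 1

/-- The exponent vector `s` with the exponent of `i` raised by one. -/
abbrev ins (s : I →₀ ℕ) (i : I) : I →₀ ℕ := s + Finsupp.single i 1

/-- The index `i` is at most every index occurring in the monomial with exponents `s`. -/
def LeAll (i : I) (s : I →₀ ℕ) : Prop := ∀ j ∈ s.support, i ≤ j

lemma leAll_ins {i j : I} {s : I →₀ ℕ} : LeAll i (ins s j) ↔ LeAll i s ∧ i ≤ j := by
  simp only [LeAll, Finsupp.mem_support_iff, ins, Finsupp.add_apply, Finsupp.single_apply]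
  constructor
  · intro h
    exact ⟨fun k hk => h k (by omega), h j (by simp)⟩
  · rintro ⟨h, h'⟩ k hk
    by_cases hjk : j = k
    · exact hjk ▸ h'
    · exact h k (by simpa [hjk] using hk)

lemma degree_ins (s : I →₀ ℕ) (i : I) : (ins s i).degree = s.degree + 1 := by
  simp [ins]

/-- A monomial in which some index is smaller than `i` has a least index, which can be split off. -/
lemma exists_min {i : I} {s : I →₀ ℕ} (h : ¬ LeAll i s) :
    ∃ d : I × (I →₀ ℕ), s = ins d.2 d.1 ∧ LeAll d.1 d.2 := by
  have hs : s.support.Nonempty := by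
    simp only [LeAll, not_forall] at h
    obtain ⟨j, hj, -⟩ := h
    exact ⟨j, hj⟩
  have hk := s.support.min'_mem hs
  have hle : ∀ j ∈ s.support, s.support.min' hs ≤ j := fun j hj => s.support.min'_le j hj
  generalize s.support.min' hs = k at hk hle
  have e : s = ins (s - Finsupp.single k 1) k := by
    refine (tsub_add_cancel_of_le ?_).symm
    rw [Finsupp.single_le_iff]
    exact Nat.one_le_iff_ne_zero.2 (Finsupp.mem_support_iff.1 hk)
  have h2 : LeAll k s := hle
  rw [e, leAll_ins] at h2
  exact ⟨(k, s - Finsupp.single k 1), e, h2.1⟩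

lemma lt_of_not_leAll {i k : I} {t : I →₀ ℕ} (h : ¬ LeAll i (ins t k)) (hk : LeAll k t) :
    k < i := by
  by_contra hc
  exact h (leAll_ins.2 ⟨fun j hj => (not_lt.1 hc).trans (hk j hj), not_lt.1 hc⟩)

lemma min_unique {k l : I} {s t : I →₀ ℕ} (h : ins s k = ins t l) (hs : LeAll k s)
    (ht : LeAll l t) : k = l ∧ s = t := by
  have h1 : LeAll k (ins s k) := leAll_ins.2 ⟨hs, le_rfl⟩
  have h2 : LeAll l (ins t l) := leAll_ins.2 ⟨ht, le_rfl⟩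
  rw [h, leAll_ins] at h1
  rw [← h, leAll_ins] at h2
  have e : k = l := le_antisymm h1.2 h2.2
  subst e
  exact ⟨rfl, add_right_cancel h⟩

/-- The polynomials of total degree at most `n`. -/
abbrev Fil (K I : Type*) [Field K] (n : ℕ) : Submodule K (MvPolynomial I K) :=
  restrictTotalDegree I K n

lemma fil_eq_span (n : ℕ) :
    Fil K I n = Submodule.span K ((fun s => mon K s) '' {s : I →₀ ℕ | s.degree ≤ n}) :=
  restrictSupport_eq_span K _

lemma mon_mem {n : ℕ} {s : I →₀ ℕ} (h : s.degree ≤ n) : mon K s ∈ Fil K I n := by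
  rw [fil_eq_span]
  exact Submodule.subset_span ⟨s, h, rfl⟩

lemma fil_mono {m n : ℕ} (h : m ≤ n) : Fil K I m ≤ Fil K I n := by
  intro p hp
  rw [mem_restrictTotalDegree] at *
  omega

lemma fil_le {n : ℕ} {Q : Submodule K (MvPolynomial I K)}
    (h : ∀ s : I →₀ ℕ, s.degree ≤ n → mon K s ∈ Q) : Fil K I n ≤ Q := by
  rw [fil_eq_span, Submodule.span_le]
  rintro _ ⟨s, hs, rfl⟩
  exact h s hs

/-! ### The action of `L` on polynomials -/

variable (b : Module.Basis I K L)

open Classical in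
/-- The `n`-th approximation to the action of `L`, correct on polynomials of degree at most `n`.
If `k < i` is the least index of a monomial `k t`, the bracket relation forces
`b i (k t) = b k (b i t) + ⁅b i, b k⁆ t`; here `b k` acts on the leading part `i t` of `b i t` as
multiplication by `X k`, and what remains involves only arguments of the degree of `t`, where
the previous approximation applies. -/
def approx : ℕ → L →ₗ[K] MvPolynomial I K →ₗ[K] MvPolynomial I K
  | 0 => b.constr K fun i => (basisMonomials I K).constr K fun s => mon K (ins s i)
  | n + 1 => b.constr K fun i => (basisMonomials I K).constr K fun s =>
      if h : LeAll i s then mon K (ins s i) else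
        mon K (ins s i)
        + approx n (b (exists_min h).choose.1)
          (approx n (b i) (mon K (exists_min h).choose.2) -
            mon K (ins (exists_min h).choose.2 i))
        + approx n ⁅b i, b (exists_min h).choose.1⁆ (mon K (exists_min h).choose.2)

lemma approx_zero (i : I) (s : I →₀ ℕ) : approx b 0 (b i) (mon K s) = mon K (ins s i) := by
  rw [approx, Module.Basis.constr_basis]
  exact (basisMonomials I K).constr_basis _ _ s

lemma approx_succ_of_leAll (n : ℕ) {i : I} {s : I →₀ ℕ} (h : LeAll i s) :
    approx b (n + 1) (b i) (mon K s) = mon K (ins s i) := by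
  rw [approx, Module.Basis.constr_basis]
  refine ((basisMonomials I K).constr_basis _ _ s).trans ?_
  rw [dif_pos h]

lemma approx_succ (n : ℕ) {i k : I} {t : I →₀ ℕ} (hk : LeAll k t) (hki : k < i) :
    approx b (n + 1) (b i) (mon K (ins t k)) =
      mon K (ins (ins t k) i) + approx b n (b k) (approx b n (b i) (mon K t) - mon K (ins t i))
        + approx b n ⁅b i, b k⁆ (mon K t) := by
  have h : ¬ LeAll i (ins t k) := fun h => (leAll_ins.1 h).2.not_gt hki
  rw [approx, Module.Basis.constr_basis]
  refine ((basisMonomials I K).constr_basis _ _ (ins t k)).trans ?_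
  rw [dif_neg h]
  obtain ⟨e1, e2⟩ := (exists_min h).choose_spec
  obtain ⟨e3, e4⟩ := min_unique e1 hk e2
  rw [← e3, ← e4]

/-- The embedding of `L` into the polynomial ring as linear forms in the basis `b`. -/
def lin : L →ₗ[K] MvPolynomial I K := b.constr K fun i => X i

@[simp] lemma lin_basis (i : I) : lin b (b i) = X i := b.constr_basis _ _ i

lemma X_mul_mon (i : I) (s : I →₀ ℕ) : (X i : MvPolynomial I K) * mon K s = mon K (ins s i) := by
  rw [X, monomial_mul, one_mul, add_comm]

lemma lin_mul_mem (x : L) {n : ℕ} {p : MvPolynomial I K} (hp : p ∈ Fil K I n) :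
    lin b x * p ∈ Fil K I (n + 1) := by
  have hx : x ∈ Submodule.span K (Set.range b) := b.span_eq ▸ Submodule.mem_top
  induction hx using Submodule.span_induction with
  | mem x h =>
    obtain ⟨i, rfl⟩ := h
    rw [lin_basis]
    refine fil_le (Q := (Fil K I (n + 1)).comap (LinearMap.mulLeft K (X i))) ?_ hp
    intro s hs
    rw [Submodule.mem_comap, LinearMap.mulLeft_apply, X_mul_mon]
    exact mon_mem (by rw [degree_ins]; omega)
  | zero => simp
  | add x y _ _ hx hy => rw [map_add, add_mul]; exact add_mem hx hy
  | smul c x _ hx => rw [map_smul, smul_mul_assoc]; exact Submodule.smul_mem _ _ hx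

/-- It is enough to check the top-degree behaviour on basis vectors and monomials. -/
lemma sub_lin_mem_of_basis {f : L →ₗ[K] MvPolynomial I K →ₗ[K] MvPolynomial I K}
    (h : ∀ i s, f (b i) (mon K s) - mon K (ins s i) ∈ Fil K I s.degree)
    (x : L) {n : ℕ} {p : MvPolynomial I K} (hp : p ∈ Fil K I n) :
    f x p - lin b x * p ∈ Fil K I n := by
  have hx : x ∈ Submodule.span K (Set.range b) := b.span_eq ▸ Submodule.mem_top
  induction hx using Submodule.span_induction with
  | mem x hx =>
    obtain ⟨i, rfl⟩ := hx
    rw [lin_basis]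
    have key : ∀ s : I →₀ ℕ, s.degree ≤ n →
        mon K s ∈ (Fil K I n).comap (f (b i) - LinearMap.mulLeft K (X i)) := by
      intro s hs
      rw [Submodule.mem_comap, LinearMap.sub_apply, LinearMap.mulLeft_apply, X_mul_mon]
      exact fil_mono hs (h i s)
    exact fil_le key hp
  | zero => simp
  | add x y _ _ hx hy =>
    rw [map_add, map_add, LinearMap.add_apply, add_mul, add_sub_add_comm]
    exact add_mem hx hy
  | smul c x _ hx =>
    rw [map_smul, map_smul, LinearMap.smul_apply, smul_mul_assoc, ← smul_sub]
    exact Submodule.smul_mem _ c hx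

lemma mem_of_sub_lin_mem {f : L →ₗ[K] MvPolynomial I K →ₗ[K] MvPolynomial I K} {x : L} {n : ℕ}
    {p : MvPolynomial I K} (h : f x p - lin b x * p ∈ Fil K I n) (hp : p ∈ Fil K I n) :
    f x p ∈ Fil K I (n + 1) := by
  have := add_mem (fil_mono n.le_succ h) (lin_mul_mem b x hp)
  rwa [sub_add_cancel] at this

lemma approx_sub_mem (n : ℕ) (i : I) (s : I →₀ ℕ) :
    approx b n (b i) (mon K s) - mon K (ins s i) ∈ Fil K I s.degree := by
  induction n generalizing i s with
  | zero => simp [approx_zero]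
  | succ n ih =>
    have ih' (x : L) {m : ℕ} {p : MvPolynomial I K} (hp : p ∈ Fil K I m) :
        approx b n x p - lin b x * p ∈ Fil K I m := sub_lin_mem_of_basis b ih x hp
    by_cases h : LeAll i s
    · simp [approx_succ_of_leAll b n h]
    obtain ⟨⟨k, t⟩, rfl, hk⟩ := exists_min h
    have hki := lt_of_not_leAll h hk
    dsimp only at *
    rw [approx_succ b n hk hki, degree_ins, add_assoc, add_sub_cancel_left]
    exact add_mem (mem_of_sub_lin_mem b (ih' _ (ih i t)) (ih i t))
      (mem_of_sub_lin_mem b (ih' _ (mon_mem le_rfl)) (mon_mem le_rfl))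

lemma eq_of_basis {f g : L →ₗ[K] MvPolynomial I K →ₗ[K] MvPolynomial I K} {n : ℕ}
    (h : ∀ i s, s.degree ≤ n → f (b i) (mon K s) = g (b i) (mon K s))
    (x : L) {p : MvPolynomial I K} (hp : p ∈ Fil K I n) : f x p = g x p := by
  have hx : x ∈ Submodule.span K (Set.range b) := b.span_eq ▸ Submodule.mem_top
  induction hx using Submodule.span_induction with
  | mem x hx =>
    obtain ⟨i, rfl⟩ := hx
    exact fil_le (Q := LinearMap.eqLocus (f (b i)) (g (b i))) (fun s hs => h i s hs) hp
  | zero => simp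
  | add x y _ _ hx hy => simp [hx, hy]
  | smul c x _ hx => simp [hx]

lemma approx_stable (n : ℕ) (x : L) {p : MvPolynomial I K} (hp : p ∈ Fil K I n) :
    approx b (n + 1) x p = approx b n x p := by
  induction n generalizing x p with
  | zero =>
    refine eq_of_basis b (fun i s hs => ?_) x hp
    have : s = 0 := (Finsupp.degree_eq_zero_iff s).1 (Nat.le_zero.1 hs)
    subst this
    rw [approx_zero, approx_succ_of_leAll b 0]
    simp [LeAll]
  | succ n ih =>
    refine eq_of_basis b (fun i s hs => ?_) x hp
    by_cases h : LeAll i s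
    · rw [approx_succ_of_leAll b _ h, approx_succ_of_leAll b _ h]
    obtain ⟨⟨k, t⟩, rfl, hk⟩ := exists_min h
    have hki := lt_of_not_leAll h hk
    dsimp only at *
    rw [degree_ins] at hs
    have ht : mon K t ∈ Fil K I n := mon_mem (by omega)
    rw [approx_succ b _ hk hki, approx_succ b _ hk hki, ih _ ht, ih _ ht, ih]
    exact fil_mono (by omega) (approx_sub_mem b n i t)

lemma approx_eq {m n : ℕ} (hmn : m ≤ n) (x : L) {p : MvPolynomial I K} (hp : p ∈ Fil K I m) :
    approx b n x p = approx b m x p := by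
  induction n, hmn using Nat.le_induction with
  | base => rfl
  | succ n hmn ih => rw [approx_stable b n x (fil_mono hmn hp), ih]

/-- The action of `L` on polynomials: on each degree, the approximations stabilise to it. -/
def act : L →ₗ[K] MvPolynomial I K →ₗ[K] MvPolynomial I K :=
  b.constr K fun i => (basisMonomials I K).constr K fun s => approx b s.degree (b i) (mon K s)

lemma act_eq (n : ℕ) (x : L) {p : MvPolynomial I K} (hp : p ∈ Fil K I n) :
    act b x p = approx b n x p := by
  refine eq_of_basis b (fun i s hs => ?_) x hp
  rw [act, Module.Basis.constr_basis]
  refine ((basisMonomials I K).constr_basis _ _ s).trans ?_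
  exact (approx_eq b hs _ (mon_mem le_rfl)).symm

lemma act_sub_mem (x : L) {n : ℕ} {p : MvPolynomial I K} (hp : p ∈ Fil K I n) :
    act b x p - lin b x * p ∈ Fil K I n := by
  rw [act_eq b n x hp]
  exact sub_lin_mem_of_basis b (approx_sub_mem b n) x hp

lemma act_of_leAll {i : I} {s : I →₀ ℕ} (h : LeAll i s) :
    act b (b i) (mon K s) = mon K (ins s i) := by
  rw [act_eq b (s.degree + 1) _ (mon_mem (by omega)), approx_succ_of_leAll b _ h]

/-- The bracket relation when one of the two indices is at most all the others: it holds by the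
very definition of the action. -/
lemma act_ins {i k : I} {t : I →₀ ℕ} (hk : LeAll k t) (hki : k ≤ i) :
    act b (b i) (act b (b k) (mon K t)) =
      act b (b k) (act b (b i) (mon K t)) + act b ⁅b i, b k⁆ (mon K t) := by
  obtain rfl | hki := hki.eq_or_lt
  · simp
  have ht : mon K t ∈ Fil K I t.degree := mon_mem le_rfl
  rw [act_of_leAll b hk, act_eq b (t.degree + 1) _ (mon_mem (by rw [degree_ins])),
    approx_succ b _ hk hki, ← act_eq b _ _ ht, ← act_eq b _ _ ht, ← act_eq b]
  · rw [map_sub, act_of_leAll b (i := k) (s := ins t i) (leAll_ins.2 ⟨hk, hki.le⟩)]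
    have : ins (ins t k) i = ins (ins t i) k := by simp only [ins]; abel
    rw [this]; abel
  · rw [act_eq b _ _ ht]
    exact approx_sub_mem b _ i t

/-- The polynomial ring is an `L`-module: the bracket relation holds on polynomials of every degree. -/
lemma act_comm (n : ℕ) (x y : L) {p : MvPolynomial I K} (hp : p ∈ Fil K I n) :
    act b x (act b y p) = act b y (act b x p) + act b ⁅x, y⁆ p := by
  induction n using Nat.strong_induction_on generalizing x y p with
  | h n ih =>
  have key (i j : I) (s : I →₀ ℕ) (hs : s.degree ≤ n) :
      act b (b i) (act b (b j) (mon K s)) =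
        act b (b j) (act b (b i) (mon K s)) + act b ⁅b i, b j⁆ (mon K s) := by
    have symm (h : act b (b j) (act b (b i) (mon K s)) =
        act b (b i) (act b (b j) (mon K s)) + act b ⁅b j, b i⁆ (mon K s)) :
        act b (b i) (act b (b j) (mon K s)) =
        act b (b j) (act b (b i) (mon K s)) + act b ⁅b i, b j⁆ (mon K s) := by
      rw [h, ← lie_skew (b i) (b j), map_neg, LinearMap.neg_apply]; abel
    by_cases hi : LeAll i s
    · obtain hij | hij := le_total j i
      · exact act_ins b (fun l hl => hij.trans (hi l hl)) hij
      · exact symm (act_ins b hi hij)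
    by_cases hj : LeAll j s
    · obtain hij | hij := le_total j i
      · exact act_ins b hj hij
      · exact symm (act_ins b (fun l hl => hij.trans (hj l hl)) hij)
    obtain ⟨⟨k, t⟩, rfl, hk⟩ := exists_min hi
    have hki := lt_of_not_leAll hi hk
    have hkj := lt_of_not_leAll hj hk
    dsimp only at *
    rw [degree_ins] at hs
    have ht : mon K t ∈ Fil K I t.degree := mon_mem le_rfl
    have IH (x y : L) {p : MvPolynomial I K} (hp : p ∈ Fil K I t.degree) :
        act b x (act b y p) = act b y (act b x p) + act b ⁅x, y⁆ p := ih _ (by omega) x y hp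
    -- `b j t` is the monomial `j t`, whose indices are all at least `k`, plus terms of degree at most
    -- that of `t`, which the induction hypothesis covers
    have aux (i j : I) (hki : k < i) (hkj : k < j) :
        act b (b i) (act b (b k) (act b (b j) (mon K t))) =
          act b (b k) (act b (b i) (act b (b j) (mon K t))) +
            act b ⁅b i, b k⁆ (act b (b j) (mon K t)) := by
      have h1 := act_ins b (i := i) (leAll_ins.2 ⟨hk, hkj.le⟩) hki.le
      have h2 := IH (b i) (b k) (act_sub_mem b (b j) ht)
      rw [lin_basis, X_mul_mon] at h2
      rw [← sub_add_cancel (act b (b j) (mon K t)) (mon K (ins t j))]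
      generalize act b (b j) (mon K t) - mon K (ins t j) = w at *
      simp only [map_add, h1, h2]
      abel
    have e := act_of_leAll b hk
    rw [← e, act_ins b hk hki.le, act_ins b hk hkj.le, map_add, map_add, aux i j hki hkj,
      aux j i hkj hki, IH (b i) ⁅b j, b k⁆ ht, IH (b j) ⁅b i, b k⁆ ht, IH (b i) (b j) ht, map_add,
      IH (b k) ⁅b i, b j⁆ ht]
    have J : ⁅b k, ⁅b i, b j⁆⁆ + ⁅b i, ⁅b j, b k⁆⁆ = ⁅b j, ⁅b i, b k⁆⁆ := by
      rw [← lie_skew (b i) (b k), lie_neg, eq_neg_iff_add_eq_zero]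
      have := lie_jacobi (b k) (b i) (b j)
      rw [← this]
    rw [← J, map_add, LinearMap.add_apply]
    abel
  have hx : x ∈ Submodule.span K (Set.range b) := b.span_eq ▸ Submodule.mem_top
  have hy : y ∈ Submodule.span K (Set.range b) := b.span_eq ▸ Submodule.mem_top
  induction hx using Submodule.span_induction with
  | zero => simp
  | add x x' _ _ hx hx' => simp only [map_add, LinearMap.add_apply, add_lie, hx, hx']; abel
  | smul c x _ hx => simp only [map_smul, LinearMap.smul_apply, smul_lie, hx, smul_add]
  | mem x hx =>
    obtain ⟨i, rfl⟩ := hx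
    induction hy using Submodule.span_induction with
    | zero => simp
    | add x x' _ _ hx hx' => simp only [map_add, LinearMap.add_apply, lie_add, hx, hx']; abel
    | smul c x _ hx => simp only [map_smul, LinearMap.smul_apply, lie_smul, hx, smul_add]
    | mem y hy =>
      obtain ⟨j, rfl⟩ := hy
      exact fil_le (Q := LinearMap.eqLocus (act b (b i) ∘ₗ act b (b j))
        (act b (b j) ∘ₗ act b (b i) + act b ⁅b i, b j⁆)) (fun s hs => key i j s hs) hp

attribute [local instance] LieRing.ofAssociativeRing

/-! ### The filtration of the enveloping algebra and symbols -/

/-- The representation of `U L` on polynomials extending `act`. -/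
def rep : UniversalEnvelopingAlgebra K L →ₐ[K] Module.End K (MvPolynomial I K) :=
  UniversalEnvelopingAlgebra.lift K
    { act b with
      map_lie' := by
        intro x y
        refine LinearMap.ext fun p => ?_
        have := act_comm b p.totalDegree x y ((mem_restrictTotalDegree I _ p).2 le_rfl)
        change act b ⁅x, y⁆ p = act b x (act b y p) - act b y (act b x p)
        rw [this]; abel }

lemma rep_ι (x : L) : rep b (UniversalEnvelopingAlgebra.ι K x) = act b x :=
  UniversalEnvelopingAlgebra.lift_ι_apply K _ x

local notation "UEA" => UniversalEnvelopingAlgebra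
local notation "ιU" => UniversalEnvelopingAlgebra.ι

/-- The first step `K + L` of the standard filtration of `U L`; its powers are the others. -/
def gen (K L : Type*) [Field K] [LieRing L] [LieAlgebra K L] : Submodule K (UEA K L) :=
  1 ⊔ LinearMap.range (ιU K : L →ₗ⁅K⁆ UEA K L).toLinearMap

lemma ι_mem_gen (x : L) : ιU K x ∈ gen K L := Submodule.mem_sup_right ⟨x, rfl⟩

lemma one_le_gen : 1 ≤ gen K L := le_sup_left

lemma pow_gen_mono {m n : ℕ} (h : m ≤ n) : gen K L ^ m ≤ gen K L ^ n := by
  exact pow_le_pow_right' one_le_gen h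

/-- `U L` is generated by `L`: by the universal property, the subalgebra generated by `L` is a
retract of `U L`. -/
lemma adjoin_ι : Algebra.adjoin K (Set.range (ιU K : L → UEA K L)) = ⊤ := by
  let S := Algebra.adjoin K (Set.range (ιU K : L → UEA K L))
  let f : L →ₗ⁅K⁆ S :=
    { toFun := fun x => ⟨ιU K x, Algebra.subset_adjoin ⟨x, rfl⟩⟩
      map_add' := fun x y => Subtype.ext (map_add _ x y)
      map_smul' := fun c x => Subtype.ext (map_smul _ c x)
      map_lie' := fun {x y} => Subtype.ext (LieHom.map_lie _ x y) }
  have h : S.val.comp (UniversalEnvelopingAlgebra.lift K f) = AlgHom.id K (UEA K L) := by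
    refine UniversalEnvelopingAlgebra.hom_ext K (LieHom.ext fun x => ?_)
    change S.val (UniversalEnvelopingAlgebra.lift K f (ιU K x)) = ιU K x
    rw [UniversalEnvelopingAlgebra.lift_ι_apply]
    rfl
  rw [eq_top_iff]
  intro u _
  have hu : S.val (UniversalEnvelopingAlgebra.lift K f u) = u := DFunLike.congr_fun h u
  rw [← hu]
  exact (UniversalEnvelopingAlgebra.lift K f u).2

lemma exists_mem_pow_gen (u : UEA K L) : ∃ n, u ∈ gen K L ^ n := by
  have hu : u ∈ Algebra.adjoin K (Set.range (ιU K : L → UEA K L)) := by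
    rw [adjoin_ι]; exact Algebra.mem_top
  induction hu using Algebra.adjoin_induction with
  | mem u hu =>
    obtain ⟨x, rfl⟩ := hu
    exact ⟨1, by rw [pow_one]; exact ι_mem_gen x⟩
  | algebraMap r => exact ⟨0, Submodule.algebraMap_mem r⟩
  | add u v _ _ hu hv =>
    obtain ⟨m, hm⟩ := hu
    obtain ⟨n, hn⟩ := hv
    exact ⟨max m n, add_mem (pow_gen_mono (le_max_left _ _) hm)
      (pow_gen_mono (le_max_right _ _) hn)⟩
  | mul u v _ _ hu hv =>
    obtain ⟨m, hm⟩ := hu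
    obtain ⟨n, hn⟩ := hv
    exact ⟨m + n, pow_add (gen K L) m n ▸ Submodule.mul_mem_mul hm hn⟩

lemma ι_mul_mem (x : L) {n : ℕ} {u : UEA K L} (hu : u ∈ gen K L ^ n) :
    ιU K x * u ∈ gen K L ^ (n + 1) := by
  rw [pow_succ']
  exact Submodule.mul_mem_mul (ι_mem_gen x) hu

/-- Induction along the filtration, with the generators `K + L` split into scalars and elements
of `L`. -/
@[elab_as_elim]
lemma gen_pow_induction {C : ∀ (n : ℕ) (u : UEA K L), u ∈ gen K L ^ n → Prop}
    (h0 : ∀ r : K, C 0 (algebraMap K _ r) (Submodule.algebraMap_mem r))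
    (hadd : ∀ n u v hu hv, C n u hu → C n v hv → C n (u + v) (add_mem hu hv))
    (hmono : ∀ n u hu, C n u hu → C (n + 1) u (pow_gen_mono n.le_succ hu))
    (hsmul : ∀ n (r : K) u hu, C n u hu → C n (r • u) (Submodule.smul_mem _ r hu))
    (hmul : ∀ n x u hu, C n u hu → C (n + 1) (ιU K x * u) (ι_mul_mem x hu)) {n : ℕ} {u : UEA K L}
    (hu : u ∈ gen K L ^ n) : C n u hu := by
  refine Submodule.pow_induction_on_left' (gen K L) (C := C) h0
    (fun u v n hu hv => hadd n u v hu hv) ?_ hu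
  intro g hg n u hu hC
  obtain ⟨c, hc, _, ⟨x, rfl⟩, rfl⟩ := Submodule.mem_sup.1 hg
  obtain ⟨r, rfl⟩ := Submodule.mem_one.1 hc
  have := hadd _ _ _ _ _ (hsmul _ r _ _ (hmono n u hu hC)) (hmul n x u hu hC)
  have e : (algebraMap K (UEA K L) r + ιU K x) * u = r • u + ιU K x * u := by
    rw [add_mul, ← Algebra.smul_def]
  have transport : ∀ w (hw : w ∈ gen K L ^ (n + 1)), w = r • u + ιU K x * u → C (n + 1) w hw := by
    rintro _ _ rfl
    exact this
  exact transport _ _ e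

/-- The component of degree `n` of `u · 1`. It is meant for `u` in step `n` of the filtration, and
is then the symbol (leading form) of `u`, or zero if `u` lies in a lower step. -/
def symb (n : ℕ) : UEA K L →ₗ[K] MvPolynomial I K :=
  homogeneousComponent n ∘ₗ LinearMap.applyₗ (1 : MvPolynomial I K) ∘ₗ (rep b).toLinearMap

lemma symb_apply (n : ℕ) (u : UEA K L) : symb b n u = homogeneousComponent n (rep b u 1) := rfl

lemma hc_zero {n : ℕ} {p : MvPolynomial I K} (hp : p ∈ Fil K I n) :
    homogeneousComponent (n + 1) p = 0 :=
  homogeneousComponent_eq_zero _ _ (Nat.lt_succ_of_le ((mem_restrictTotalDegree I _ p).1 hp))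

lemma hc_lin_mul (x : L) (n : ℕ) (p : MvPolynomial I K) :
    homogeneousComponent (n + 1) (lin b x * p) = lin b x * homogeneousComponent n p := by
  have hx : x ∈ Submodule.span K (Set.range b) := b.span_eq ▸ Submodule.mem_top
  induction hx using Submodule.span_induction with
  | mem x hx =>
    obtain ⟨i, rfl⟩ := hx
    rw [lin_basis]
    suffices h : homogeneousComponent (n + 1) ∘ₗ LinearMap.mulLeft K (X i : MvPolynomial I K) =
        LinearMap.mulLeft K (X i) ∘ₗ homogeneousComponent n from DFunLike.congr_fun h p
    refine (basisMonomials I K).ext fun s => ?_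
    change homogeneousComponent (n + 1) (X i * mon K s) = X i * homogeneousComponent n (mon K s)
    rw [X_mul_mon, homogeneousComponent_of_mem (isHomogeneous_monomial 1 (degree_ins s i)),
      homogeneousComponent_of_mem (isHomogeneous_monomial 1 rfl)]
    by_cases h : n = s.degree
    · rw [if_pos h, if_pos (by omega), X_mul_mon]
    · rw [if_neg h, if_neg (by omega), mul_zero]
  | zero => simp
  | add x y _ _ hx hy => rw [map_add, add_mul, add_mul, map_add, hx, hy]
  | smul c x _ hx => rw [map_smul, smul_mul_assoc, smul_mul_assoc, map_smul, hx]

lemma hc_act (x : L) (n : ℕ) {p : MvPolynomial I K} (hp : p ∈ Fil K I n) :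
    homogeneousComponent (n + 1) (act b x p) = lin b x * homogeneousComponent n p := by
  rw [← sub_add_cancel (act b x p) (lin b x * p), map_add, hc_zero (act_sub_mem b x hp), zero_add,
    hc_lin_mul]

lemma act_mem (x : L) {n : ℕ} {p : MvPolynomial I K} (hp : p ∈ Fil K I n) :
    act b x p ∈ Fil K I (n + 1) := mem_of_sub_lin_mem b (act_sub_mem b x hp) hp

lemma one_mem_fil : (1 : MvPolynomial I K) ∈ Fil K I 0 := by
  rw [mem_restrictTotalDegree, totalDegree_one]

lemma rep_mem {n : ℕ} {u : UEA K L} (hu : u ∈ gen K L ^ n) {m : ℕ} {p : MvPolynomial I K}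
    (hp : p ∈ Fil K I m) : rep b u p ∈ Fil K I (n + m) := by
  induction hu using gen_pow_induction with
  | h0 r =>
    rw [AlgHom.commutes, Module.algebraMap_end_apply, zero_add]
    exact Submodule.smul_mem _ _ hp
  | hadd n u v _ _ hu hv =>
    rw [map_add, LinearMap.add_apply]
    exact add_mem hu hv
  | hmono n u _ hu => exact fil_mono (by omega) hu
  | hsmul n r u _ hu =>
    rw [map_smul, LinearMap.smul_apply]
    exact Submodule.smul_mem _ _ hu
  | hmul n x u _ hu =>
    rw [map_mul, Module.End.mul_apply, rep_ι, add_right_comm]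
    exact act_mem b x hu

lemma symb_succ_eq_zero {n : ℕ} {u : UEA K L} (hu : u ∈ gen K L ^ n) : symb b (n + 1) u = 0 :=
  hc_zero (rep_mem b hu one_mem_fil)

lemma symb_ι_mul (x : L) {n : ℕ} {u : UEA K L} (hu : u ∈ gen K L ^ n) :
    symb b (n + 1) (ιU K x * u) = lin b x * symb b n u := by
  rw [symb_apply, map_mul, Module.End.mul_apply, rep_ι]
  exact hc_act b x n (rep_mem b hu one_mem_fil)

lemma symb_algebraMap (r : K) : symb b 0 (algebraMap K (UEA K L) r) = C r := by
  rw [symb_apply, AlgHom.commutes, Module.algebraMap_end_apply]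
  simp [homogeneousComponent_zero, smul_eq_C_mul]

lemma symb_mul {n : ℕ} {u : UEA K L} (hu : u ∈ gen K L ^ n) {m : ℕ} {v : UEA K L}
    (hv : v ∈ gen K L ^ m) : symb b (n + m) (u * v) = symb b n u * symb b m v := by
  induction hu using gen_pow_induction with
  | h0 r =>
    rw [symb_algebraMap, ← Algebra.smul_def, map_smul, zero_add, smul_eq_C_mul]
  | hadd n u u' _ _ hu hu' => rw [add_mul, map_add, map_add, hu, hu', add_mul]
  | hmono n u hun hu =>
    rw [symb_succ_eq_zero b hun, zero_mul, add_right_comm]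
    exact symb_succ_eq_zero b (pow_add (gen K L) n m ▸ Submodule.mul_mem_mul hun hv)
  | hsmul n r u _ hu => rw [smul_mul_assoc, map_smul, map_smul, hu, smul_mul_assoc]
  | hmul n x u hun hu =>
    rw [mul_assoc, add_right_comm, symb_ι_mul b x (pow_add (gen K L) n m ▸ Submodule.mul_mem_mul hun hv),
      hu, symb_ι_mul b x hun, mul_assoc]

/-! ### Vanishing of the symbol lowers the degree -/

/-- The product in `U L` of the basis vectors listed in `l`. -/
def word (l : List I) : UEA K L := (l.map fun i => ιU K (b i)).prod

lemma word_mem (l : List I) : word b l ∈ gen K L ^ l.length := by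
  induction l with
  | nil => exact Submodule.one_le.1 (by simp)
  | cons i l ih =>
    rw [List.length_cons, pow_succ']
    exact Submodule.mul_mem_mul (ι_mem_gen _) ih

/-- A product of `n + 1` basis vectors depends on their order only up to shorter products. -/
lemma word_perm {l l' : List I} (h : l.Perm l') {n : ℕ} (hn : l.length ≤ n + 1) :
    word b l - word b l' ∈ gen K L ^ n := by
  induction h generalizing n with
  | nil => simp
  | cons i h ih =>
    rename_i l l'
    have e : word b (i :: l) - word b (i :: l') = ιU K (b i) * (word b l - word b l') := by
      simp [word, mul_sub]
    rw [e]
    cases n with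
    | zero =>
      have hl : l = [] := List.length_eq_zero_iff.1 (by simpa using hn)
      subst hl
      rw [List.nil_perm.1 h]
      simp
    | succ n =>
      rw [pow_succ']
      exact Submodule.mul_mem_mul (ι_mem_gen _) (ih (by simpa using hn))
  | swap i j l =>
    have e : word b (j :: i :: l) - word b (i :: j :: l) = ιU K ⁅b j, b i⁆ * word b l := by
      rw [LieHom.map_lie, LieRing.of_associative_ring_bracket]
      simp only [word, List.map_cons, List.prod_cons]
      noncomm_ring
    rw [e]
    refine pow_gen_mono (m := l.length + 1) (by simpa using hn) ?_
    rw [pow_succ']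
    exact Submodule.mul_mem_mul (ι_mem_gen _) (word_mem b l)
  | trans h1 h2 ih1 ih2 =>
    have := add_mem (ih1 hn) (ih2 (by rwa [← h1.length_eq]))
    rwa [sub_add_sub_cancel] at this

/-- A linear section of the symbol map, up to lower order: each monomial goes to the product of its
basis vectors, in an arbitrarily chosen order. -/
def sec : MvPolynomial I K →ₗ[K] UEA K L :=
  (basisMonomials I K).constr K fun s => word b s.toMultiset.toList

lemma sec_mon (s : I →₀ ℕ) : sec b (mon K s) = word b s.toMultiset.toList :=
  (basisMonomials I K).constr_basis _ _ s

lemma ι_mul_sec (x : L) {n : ℕ} {p : MvPolynomial I K} (hp : p ∈ Fil K I n) :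
    ιU K x * sec b p - sec b (lin b x * p) ∈ gen K L ^ n := by
  have hx : x ∈ Submodule.span K (Set.range b) := b.span_eq ▸ Submodule.mem_top
  induction hx using Submodule.span_induction with
  | mem x hx =>
    obtain ⟨i, rfl⟩ := hx
    rw [lin_basis]
    refine fil_le (Q := (gen K L ^ n).comap
      (LinearMap.mulLeft K (ιU K (b i)) ∘ₗ sec b - sec b ∘ₗ LinearMap.mulLeft K (X i))) ?_ hp
    intro s hs
    simp only [Submodule.mem_comap, LinearMap.sub_apply, LinearMap.comp_apply,
      LinearMap.mulLeft_apply, X_mul_mon, sec_mon]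
    have e : ιU K (b i) * word b s.toMultiset.toList = word b (i :: s.toMultiset.toList) := by
      simp [word]
    rw [e]
    refine word_perm b ?_ ?_
    · rw [← Multiset.coe_eq_coe, ← Multiset.cons_coe]
      simp [ins, add_comm]
    · simpa [Finsupp.card_toMultiset, Finsupp.degree_apply, Finsupp.sum] using hs
  | zero => simp
  | add x y _ _ hx hy =>
    rw [map_add, map_add, add_mul, add_mul, map_add, add_sub_add_comm]
    exact add_mem hx hy
  | smul c x _ hx =>
    rw [map_smul, map_smul, smul_mul_assoc, smul_mul_assoc, map_smul, ← smul_sub]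
    exact Submodule.smul_mem _ c hx

/-- The filtration of `U L` shifted by one step, starting with zero. -/
def below (K L : Type*) [Field K] [LieRing L] [LieAlgebra K L] : ℕ → Submodule K (UEA K L)
  | 0 => ⊥
  | n + 1 => gen K L ^ n

lemma sub_sec_symb {n : ℕ} {u : UEA K L} (hu : u ∈ gen K L ^ n) :
    u - sec b (symb b n u) ∈ below K L n := by
  have hmem (m : ℕ) (v : UEA K L) : symb b m v ∈ Fil K I m := by
    rw [mem_restrictTotalDegree]
    exact (homogeneousComponent_isHomogeneous _ _).totalDegree_le
  induction hu using gen_pow_induction with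
  | h0 r =>
    rw [symb_algebraMap]
    have : sec b (C r) = algebraMap K (UEA K L) r := by
      have : (C r : MvPolynomial I K) = r • mon K 0 := by
        rw [smul_monomial, smul_eq_mul, mul_one, C_apply]
      rw [this, map_smul, sec_mon]
      simp [word, Algebra.algebraMap_eq_smul_one]
    rw [this, sub_self]
    exact zero_mem _
  | hadd n u v _ _ hu hv =>
    rw [map_add, map_add, add_sub_add_comm]
    exact add_mem hu hv
  | hmono n u hun _ => simpa [symb_succ_eq_zero b hun, below] using hun
  | hsmul n r u _ hu =>
    rw [map_smul, map_smul, ← smul_sub]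
    exact Submodule.smul_mem _ r hu
  | hmul n x u hun hu =>
    rw [symb_ι_mul b x hun]
    have h1 := ι_mul_sec b x (hmem n u)
    have h2 : ιU K x * (u - sec b (symb b n u)) ∈ gen K L ^ n := by
      cases n with
      | zero =>
        rw [(Submodule.mem_bot K).1 hu, mul_zero]
        exact zero_mem _
      | succ n => exact ι_mul_mem x hu
    have := add_mem h2 h1
    rwa [mul_sub, sub_add_sub_cancel] at this

/-- In the first step of the filtration that contains it, a nonzero element has nonzero symbol. -/
lemma exists_symb_ne_zero {u : UEA K L} (hu : u ≠ 0) :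
    ∃ n, u ∈ gen K L ^ n ∧ symb b n u ≠ 0 := by
  classical
  have hex := exists_mem_pow_gen u
  refine ⟨Nat.find hex, Nat.find_spec hex, fun h0 => ?_⟩
  have h := sub_sec_symb b (Nat.find_spec hex)
  rw [h0, map_zero, sub_zero] at h
  have hmin := fun m => Nat.find_min hex (m := m)
  generalize Nat.find hex = n at *
  cases n with
  | zero => exact hu ((Submodule.mem_bot K).1 h)
  | succ n => exact hmin n n.lt_succ_self h


/-! ### Principal ideals -/

lemma symb_ι (x : L) : symb b 1 (ιU K x) = lin b x := by
  have h := symb_ι_mul b x (n := 0) (u := 1) (Submodule.one_le.1 le_rfl)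
  have h1 : symb b 0 (1 : UEA K L) = 1 := by
    rw [← map_one (algebraMap K (UEA K L)), symb_algebraMap, C_1]
  rwa [h1, mul_one, mul_one] at h

lemma lin_injective : Function.Injective (lin b) := by
  have h (i : I) : lcoeff K (Finsupp.single i 1) ∘ₗ lin b = b.coord i := by
    refine b.ext fun j => ?_
    simp [coeff_X, Finsupp.single_apply, Finsupp.single_left_inj]
  intro x y hxy
  refine b.ext_elem fun i => ?_
  have h1 := DFunLike.congr_fun (h i) x
  have h2 := DFunLike.congr_fun (h i) y
  simp only [LinearMap.comp_apply, Module.Basis.coord_apply] at h1 h2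
  rw [← h1, ← h2, hxy]

/-- If left ideals of `U L` are principal, then `L` lies on a line, spanned by the degree-one symbol
of a generator of the augmentation ideal. -/
lemma exists_lin_eq_smul [IsPrincipalIdealRing (UEA K L)] :
    ∃ q : MvPolynomial I K, ∀ x, ∃ r : K, lin b x = r • q := by
  let ε : UEA K L →ₐ[K] K := UniversalEnvelopingAlgebra.lift K 0
  have hε (x : L) : ε (ιU K x) = 0 := by
    rw [UniversalEnvelopingAlgebra.lift_ι_apply, LieHom.zero_apply]
  obtain ⟨a, ha⟩ := (IsPrincipalIdealRing.principal (RingHom.ker ε)).principal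
  have ha0 : ε a = 0 := by
    rw [← RingHom.mem_ker, ha]
    exact Submodule.mem_span_singleton_self a
  refine ⟨symb b 1 a, fun x => ?_⟩
  obtain rfl | hx := eq_or_ne x 0
  · exact ⟨0, by simp⟩
  have hx0 : ιU K x ≠ 0 := fun h => hx (lin_injective b (by rw [← symb_ι, h, map_zero, map_zero]))
  have hmem : ιU K x ∈ RingHom.ker ε := hε x
  rw [ha] at hmem
  obtain ⟨u, hu⟩ := Submodule.mem_span_singleton.1 hmem
  rw [smul_eq_mul] at hu
  obtain ⟨n, hun, hus⟩ := exists_symb_ne_zero b (u := u) (by rintro rfl; simp [← hu] at hx0)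
  obtain ⟨m, ham, has⟩ := exists_symb_ne_zero b (u := a) (by rintro rfl; simp [← hu] at hx0)
  have hs : symb b (n + m) (ιU K x) ≠ 0 := by
    rw [← hu, symb_mul b hun ham]
    exact mul_ne_zero hus has
  -- a generator of degree zero would be a scalar, which the augmentation kills only if it is zero
  have hm : m ≠ 0 := by
    rintro rfl
    rw [pow_zero] at ham
    obtain ⟨r, rfl⟩ := Submodule.mem_one.1 ham
    rw [AlgHom.commutes] at ha0
    change r = 0 at ha0
    simp [ha0] at has
  have hnm : ¬ 2 ≤ n + m := by
    intro h
    obtain ⟨k, hk⟩ : ∃ k, n + m = k + 1 := ⟨n + m - 1, by omega⟩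
    rw [hk] at hs
    refine hs (symb_succ_eq_zero b (pow_gen_mono (m := 1) (by omega) ?_))
    rw [pow_one]
    exact ι_mem_gen x
  have hn : n = 0 := by omega
  subst hn
  rw [pow_zero] at hun
  obtain ⟨r, rfl⟩ := Submodule.mem_one.1 hun
  exact ⟨r, by rw [← symb_ι, ← hu, ← Algebra.smul_def, map_smul]⟩

end
end PBW

/-- Let `L` be a Lie algebra over a field `K`. Then the universal enveloping algebra
`U(L)` is a principal ideal ring if and only if `L` is either zero or one-dimensional,
i.e. `dim_K L ≤ 1`. -/
theorem universalEnvelopingAlgebra_isPrincipalIdealRing_iff_rank_le_one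
    (K L : Type*) [Field K] [LieRing L] [LieAlgebra K L] :
    IsPrincipalIdealRing (UniversalEnvelopingAlgebra K L) ↔ Module.rank K L ≤ 1 := by
  rw [rank_le_one_iff]
  constructor
  · intro h
    let b := Module.Basis.ofVectorSpace K L
    obtain ⟨_, -⟩ := exists_wellFoundedLT (Module.Basis.ofVectorSpaceIndex K L)
    obtain ⟨q, hq⟩ := PBW.exists_lin_eq_smul b
    by_cases h0 : ∀ v : L, v = 0
    · exact ⟨0, fun v => ⟨0, by rw [h0 v, smul_zero]⟩⟩
    push Not at h0
    obtain ⟨v₀, hv₀⟩ := h0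
    obtain ⟨c, hc⟩ := hq v₀
    have hc0 : c ≠ 0 := by
      rintro rfl
      exact hv₀ (PBW.lin_injective b (by rw [hc, zero_smul, map_zero]))
    refine ⟨v₀, fun v => ?_⟩
    obtain ⟨r, hr⟩ := hq v
    refine ⟨r / c, PBW.lin_injective b ?_⟩
    rw [map_smul, hc, hr, smul_smul, div_mul_cancel₀ _ hc0]
  · rintro ⟨v₀, hv₀⟩
    let f : Polynomial K →ₐ[K] UniversalEnvelopingAlgebra K L :=
      Polynomial.aeval (UniversalEnvelopingAlgebra.ι K v₀)
    have hf : Function.Surjective f := by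
      rw [← AlgHom.range_eq_top, eq_top_iff, ← PBW.adjoin_ι, Algebra.adjoin_le_iff]
      rintro _ ⟨v, rfl⟩
      obtain ⟨r, rfl⟩ := hv₀ v
      refine ⟨r • Polynomial.X, ?_⟩
      change f (r • Polynomial.X) = _
      rw [map_smul, Polynomial.aeval_X]
      exact (map_smul _ _ _).symm
    exact IsPrincipalIdealRing.of_surjective f hf
end

section
/- Let H be a Hopf algebra over a field F, let B be a finite-dimensional Hopf algebra over F, and let ι : B → H be an injective morphism of Hopf algebras (a bialgebra homomorphism) such that H is free as a left B-module via ι. Then the right annihilator in H of the augmentation ideal ω(B), namely {h ∈ H : ι(b)·h = 0 for every b ∈ B with ε_B(b) = 0}, is equal to the F-linear span of all products ι(t)·h where t is a left integral of B and h ∈ H. -/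
/-!
If `t` is a left integral and `ε(b) = 0`, then `b t = ε(b) t = 0`, so `ι(t) h` is annihilated by
`ω(B)`. Conversely, expand `h = ∑ ι(u_w) w` in a `B`-basis of `H`. If `ω(B)` annihilates `h`, then
by uniqueness of coordinates it annihilates every `u_w`; applied to `a - ε(a) 1 ∈ ω(B)` this says
`a u_w = ε(a) u_w`, so every `u_w` is a left integral.
-/

/-- Let `H` be a Hopf algebra over a field `F`, let `B` be a finite-dimensional Hopf
algebra over `F`, and let `ι : B → H` be an injective morphism of Hopf algebras such
that `H` is free as a left `B`-module via `ι` (i.e. `H` has a `B`-basis).  Then the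
right annihilator in `H` of the augmentation ideal `ω(B) = ker ε_B`, namely
`{h ∈ H : ι(b)·h = 0 for every b ∈ B with ε_B(b) = 0}`, equals the `F`-linear span of
all products `ι(t)·h` where `t` is a left integral of `B` and `h ∈ H`. -/
theorem rightAnnihilator_augmentation_eq_span_leftIntegrals
    (F B H : Type*) [Field F] [Ring B] [Ring H]
    [HopfAlgebra F B] [HopfAlgebra F H] [FiniteDimensional F B]
    (ι : B →ₐc[F] H) (hinj : Function.Injective ι)
    (hfree : ∃ s : Set H, Function.Bijective
      (fun f : s →₀ B => f.sum fun w u => ι u * (w : H))) :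
    {h : H | ∀ b : B, Coalgebra.counit (R := F) b = 0 → ι b * h = 0} =
      (Submodule.span F {x : H |
          ∃ t : B, (∀ a : B, a * t = Coalgebra.counit (R := F) a • t) ∧
            ∃ h : H, x = ι t * h} : Set H) := by
  obtain ⟨s, hs_inj, hs_surj⟩ := hfree
  ext x
  constructor
  · intro hx
    obtain ⟨f, rfl⟩ := hs_surj x
    refine Submodule.sum_mem _ fun w _ => Submodule.subset_span ⟨f w, fun a => ?_, w, rfl⟩
    -- `ω(B)` is spanned by the elements `a - ε(a) 1`.
    have hker : Coalgebra.counit (R := F) (a - algebraMap F B (Coalgebra.counit (R := F) a))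
        = 0 := by
      simp
    have hzero := hx _ hker
    set b := a - algebraMap F B (Coalgebra.counit (R := F) a) with hb
    -- `b • f` and `0` have the same expansion, so freeness forces `b • f = 0`.
    have hf : f.mapRange (b * ·) (mul_zero b) = 0 := by
      apply hs_inj
      simp only [Finsupp.sum_zero_index]
      rw [Finsupp.sum_mapRange_index (by simp)]
      simpa only [Finsupp.sum, Finset.mul_sum, map_mul, mul_assoc] using hzero
    have hw : b * f w = 0 := by simpa using DFunLike.congr_fun hf w
    rw [hb, sub_mul, sub_eq_zero] at hw
    rw [hw, Algebra.smul_def]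
  · intro hx b hb
    induction hx using Submodule.span_induction with
    | mem x hx =>
      obtain ⟨t, ht, h, rfl⟩ := hx
      rw [← mul_assoc, ← map_mul, ht, hb, zero_smul, map_zero, zero_mul]
    | zero => exact mul_zero _
    | add x y _ _ hx hy => rw [mul_add, hx, hy, add_zero]
    | smul c x _ hx => rw [mul_smul_comm, hx, smul_zero]
end

section
/- Let H be a finite-dimensional Hopf algebra over a field F and let w ∈ H be an element such that the augmentation ideal ω(H) = ker ε equals the right ideal wH = {w·h : h ∈ H}. Then ω(H) also equals the left ideal Hw = {h·w : h ∈ H}. -/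
/-!
If `ker ε = wH`, then `h * w = 0` holds exactly when `h` annihilates `ker ε` from the left, i.e. when
`h` is a right integral: `h * x = ε(x) h` for all `x`. The right integrals of a finite-dimensional
Hopf algebra span at most a line, so the map `h ↦ h * w` has rank at least `dim H - 1 = dim ker ε`.
Its image lies in `ker ε` because `ε(w) = 0`, and therefore equals `ker ε`.

The bound on the integrals is the injectivity half of the fundamental theorem of Hopf modules, made
explicit. Write `S` for the antipode and `θ(t) = ∑ S(t₁) ⊗ t₂`. A right integral `t` satisfies
`(x ⊗ 1) θ(t) = θ(t) (1 ⊗ x)` (`mul_antipodeComul`), so for `f ∈ H*` the single vector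
`a = ∑ f(S(t₁)) t₂` determines `∑ f(x S(t₁)) t₂ = a x` for every `x`, hence determines
`∑ f(- S(t₁)) ⊗ t₂ ∈ H* ⊗ H`. From that tensor `f(y) t` is recovered linearly, as
`∑ f(y S²(t₂) S(t₁)) t₃ = f(y) t` (`retract_antipodeComul`). Consequently, for right integrals
`s, t`, the map `(f, g) ↦ ∑ f(S(s₁)) s₂ + ∑ g(S(t₁)) t₂` from `H* × H*` to `H` can only vanish at
pairs with `f(y) s + g(y) t = 0` for all `y`. It has a nonzero kernel for dimension reasons, which
makes `s` and `t` linearly dependent.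
-/

open scoped TensorProduct

namespace HopfIntegral

open HopfAlgebra Coalgebra

variable {F H : Type*} [Field F] [Ring H] [HopfAlgebra F H]

/-- The tensor `θ(t) = ∑ S(t₁) ⊗ t₂`, as a linear map in `t`. -/
noncomputable def antipodeComul : H →ₗ[F] H ⊗[F] H :=
  (antipode F (A := H)).rTensor H ∘ₗ comul

/-- The functional `f(- z)`, that is `x ↦ f (x * z)`, as a linear map in `z`. -/
noncomputable def translate (f : Module.Dual F H) : H →ₗ[F] Module.Dual F H :=
  (LinearMap.mul F H).flip.compr₂ f

lemma translate_apply (f : Module.Dual F H) (z x : H) : translate f z x = f (x * z) := rfl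

lemma rTensor_antipode_mul (D : H ⊗[F] H) (b c : H) :
    (antipode F (A := H)).rTensor H (D * (b ⊗ₜ c)) =
      (antipode F b ⊗ₜ 1) * (antipode F (A := H)).rTensor H D * (1 ⊗ₜ c) := by
  induction D with
  | zero => simp
  | add p q hp hq => simp only [add_mul, mul_add, map_add, hp, hq]
  | tmul p q => simp [antipode_mul_antidistrib]

/-- Both sides equal `∑ x₁ S(t₁ x₂) ⊗ t₂ x₃`: the integral property absorbs `x₂ ⊗ x₃`, while
`S(t₁ x₂) = S(x₂) S(t₁)` lets the antipode axiom absorb `x₁ ⊗ x₂`. -/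
lemma mul_antipodeComul {t : H} (ht : ∀ x : H, t * x = counit (R := F) x • t) (x : H) :
    (x ⊗ₜ[F] (1 : H)) * antipodeComul (F := F) t = antipodeComul (F := F) t * (1 ⊗ₜ[F] x) := by
  -- `N (p ⊗ c) = (p ⊗ 1) θ(t) (1 ⊗ c)` and `K (a ⊗ b ⊗ c) = N (a S(b) ⊗ c)`
  let N : H ⊗[F] H →ₗ[F] H ⊗[F] H := TensorProduct.lift
    (LinearMap.mk₂ F (fun p c => (p ⊗ₜ[F] (1 : H)) * antipodeComul (F := F) t * (1 ⊗ₜ[F] c))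
      (by intros; simp only [TensorProduct.add_tmul, add_mul])
      (by intros; simp only [← TensorProduct.smul_tmul', smul_mul_assoc])
      (by intros; simp only [TensorProduct.tmul_add, mul_add])
      (by intros; simp only [TensorProduct.tmul_smul, mul_smul_comm]))
  have hN (p c : H) : N (p ⊗ₜ c) = (p ⊗ₜ[F] (1 : H)) * antipodeComul (F := F) t * (1 ⊗ₜ[F] c) := rfl
  let K : (H ⊗[F] H) ⊗[F] H →ₗ[F] H ⊗[F] H :=
    N ∘ₗ (LinearMap.mul' F H ∘ₗ (antipode F (A := H)).lTensor H).rTensor H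
  have h1 : K (comul.rTensor H (comul (R := F) x)) = antipodeComul (F := F) t * (1 ⊗ₜ[F] x) := by
    have : K ∘ₗ comul.rTensor H
        = N ∘ₗ (Algebra.linearMap F H).rTensor H ∘ₗ (counit (R := F) (A := H)).rTensor H := by
      simp only [K, LinearMap.comp_assoc, ← LinearMap.rTensor_comp]
      rw [mul_antipode_lTensor_comul]
    have := LinearMap.congr_fun this (comul (R := F) x)
    simp only [LinearMap.comp_apply] at this
    rw [this, rTensor_counit_comul, LinearMap.rTensor_tmul, hN]
    simp [← Algebra.TensorProduct.one_def]
  have h2 (p : H ⊗[F] H) : K ((TensorProduct.assoc F H H H).symm (comul.lTensor H p)) =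
      ((counit (R := F) (A := H)).lTensor H p |> TensorProduct.rid F H) ⊗ₜ[F] (1 : H)
        * antipodeComul (F := F) t := by
    induction p with
    | zero => simp
    | add p q hp hq => simp only [map_add, hp, hq, TensorProduct.add_tmul, add_mul]
    | tmul a v =>
      have h3 (q : H ⊗[F] H) : K ((TensorProduct.assoc F H H H).symm (a ⊗ₜ q)) =
          (a ⊗ₜ 1) * (antipode F (A := H)).rTensor H (comul (R := F) t * q) := by
        induction q with
        | zero => simp
        | add p q hp hq => simp only [TensorProduct.tmul_add, map_add, hp, hq, mul_add]
        | tmul b c =>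
          rw [rTensor_antipode_mul]
          simp [K, hN, antipodeComul, ← mul_assoc]
      rw [LinearMap.lTensor_tmul, h3, ← Bialgebra.comul_mul, ht v]
      simp [antipodeComul, ← TensorProduct.smul_tmul']
  have h3 := h2 (comul x)
  rw [coassoc_symm_apply, h1, lTensor_counit_comul] at h3
  simpa using h3.symm

lemma dualTensorHom_mul_left (f : Module.Dual F H) (x : H) (p : H ⊗[F] H) :
    dualTensorHom F H H ((translate f).rTensor H ((x ⊗ₜ 1) * p)) 1 =
      dualTensorHom F H H ((translate f).rTensor H p) x := by
  induction p with
  | zero => simp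
  | add p q hp hq => simp only [mul_add, map_add, LinearMap.add_apply, hp, hq]
  | tmul p q => simp [translate_apply, dualTensorHom_apply]

lemma dualTensorHom_mul_right (f : Module.Dual F H) (x : H) (p : H ⊗[F] H) :
    dualTensorHom F H H ((translate f).rTensor H (p * (1 ⊗ₜ x))) 1 =
      dualTensorHom F H H ((translate f).rTensor H p) 1 * x := by
  induction p with
  | zero => simp
  | add p q hp hq => simp only [add_mul, map_add, LinearMap.add_apply, hp, hq]
  | tmul p q => simp [translate_apply, dualTensorHom_apply]

/-- The value at `x` of `∑ f(- S(t₁)) ⊗ t₂`, viewed as an endomorphism of `H`, is determined by its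
value at `1`. -/
lemma dualTensorHom_antipodeComul {t : H} (ht : ∀ x : H, t * x = counit (R := F) x • t)
    (f : Module.Dual F H) (x : H) :
    dualTensorHom F H H ((translate f).rTensor H (antipodeComul t)) x =
      dualTensorHom F H H ((translate f).rTensor H (antipodeComul t)) 1 * x := by
  rw [← dualTensorHom_mul_left, mul_antipodeComul ht, dualTensorHom_mul_right]

/-- The linear map `H* ⊗ H → H`, `g ⊗ z ↦ ∑ g(y S²(z₁)) z₂`. -/
noncomputable def retract (y : H) : Module.Dual F H ⊗[F] H →ₗ[F] H :=
  (TensorProduct.lid F H).toLinearMap ∘ₗ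
    (contractLeft F H ∘ₗ
      (LinearMap.mulLeft F y ∘ₗ antipode F ∘ₗ antipode F).lTensor (Module.Dual F H)).rTensor H ∘ₗ
    (TensorProduct.assoc F (Module.Dual F H) H H).symm.toLinearMap ∘ₗ
    comul.lTensor (Module.Dual F H)

/-- `∑ f(y S²(t₂) S(t₁)) t₃ = f(y) t`, since `S²(t₂) S(t₁) = S(t₁ S(t₂))`. -/
lemma retract_antipodeComul (y : H) (f : Module.Dual F H) (t : H) :
    retract y ((translate f).rTensor H (antipodeComul t)) = f y • t := by
  let Q : H →ₗ[F] F := f ∘ₗ LinearMap.mulLeft F y ∘ₗ antipode F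
  have h1 (p : H ⊗[F] H) :
      retract y ((translate f).rTensor H ((antipode F (A := H)).rTensor H p)) =
      TensorProduct.lid F H ((Q ∘ₗ LinearMap.mul' F H ∘ₗ (antipode F (A := H)).lTensor H).rTensor H
        ((TensorProduct.assoc F H H H).symm (comul.lTensor H p))) := by
    induction p with
    | zero => simp
    | add p q hp hq => simp only [map_add, hp, hq]
    | tmul a v =>
      simp only [retract, LinearMap.comp_apply, LinearMap.rTensor_tmul, LinearMap.lTensor_tmul]
      induction comul (R := F) v with
      | zero => simp
      | add p q hp hq => simp only [TensorProduct.tmul_add, map_add, hp, hq]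
      | tmul b c => simp [Q, translate_apply, antipode_mul_antidistrib, mul_assoc]
  have h2 : (Q ∘ₗ LinearMap.mul' F H ∘ₗ (antipode F (A := H)).lTensor H).rTensor H ∘ₗ
      comul.rTensor H
        = (Q ∘ₗ Algebra.linearMap F H).rTensor H ∘ₗ (counit (R := F) (A := H)).rTensor H := by
    simp only [LinearMap.comp_assoc, ← LinearMap.rTensor_comp]
    rw [mul_antipode_lTensor_comul]
  have h3 := LinearMap.congr_fun h2 (comul (R := F) t)
  simp only [LinearMap.comp_apply] at h3
  rw [antipodeComul, LinearMap.comp_apply, h1, coassoc_symm_apply, h3, rTensor_counit_comul]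
  simp [Q]

/-- Two right integrals of a finite-dimensional Hopf algebra are linearly dependent. -/
lemma exists_smul_eq [FiniteDimensional F H] {s t : H}
    (hs : ∀ x : H, s * x = counit (R := F) x • s) (ht : ∀ x : H, t * x = counit (R := F) x • t)
    (hs0 : s ≠ 0) : ∃ c : F, c • s = t := by
  let A (r : H) : Module.Dual F H →ₗ[F] Module.Dual F H ⊗[F] H :=
    { toFun := fun f => (translate f).rTensor H (antipodeComul r)
      map_add' := fun f g => by
        rw [← LinearMap.add_apply, ← LinearMap.rTensor_add]
        congr 2
      map_smul' := fun c f => by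
        rw [RingHom.id_apply, ← LinearMap.smul_apply, ← LinearMap.rTensor_smul]
        congr 2 }
  have hA (r : H) (f) : A r f = (translate f).rTensor H (antipodeComul r) := rfl
  let B : Module.Dual F H × Module.Dual F H →ₗ[F] Module.Dual F H ⊗[F] H := (A s).coprod (A t)
  let G : Module.Dual F H × Module.Dual F H →ₗ[F] H :=
    LinearMap.applyₗ (1 : H) ∘ₗ dualTensorHom F H H ∘ₗ B
  have : Nontrivial H := ⟨s, 0, hs0⟩
  have hpos : 0 < Module.finrank F H := Module.finrank_pos
  have hker : LinearMap.ker G ≠ ⊥ := G.ker_ne_bot_of_finrank_lt (by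
    rw [Module.finrank_prod, Subspace.dual_finrank_eq]; omega)
  obtain ⟨⟨f, g⟩, hfg, hne⟩ := (Submodule.ne_bot_iff _).1 hker
  have hG : dualTensorHom F H H (B (f, g)) 1 = 0 := hfg
  have hB : B (f, g) = 0 := by
    apply (dualTensorHomEquiv F H H).injective
    rw [map_zero]
    ext x
    have : dualTensorHom F H H (B (f, g)) x = dualTensorHom F H H (B (f, g)) 1 * x := by
      simp only [B, LinearMap.coprod_apply, map_add, LinearMap.add_apply, hA, add_mul]
      rw [dualTensorHom_antipodeComul hs, dualTensorHom_antipodeComul ht]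
    rw [hG, zero_mul] at this
    simpa using this
  have hrel (y : H) : f y • s + g y • t = 0 := by
    have := congrArg (retract y) hB
    simpa [B, hA, retract_antipodeComul] using this
  by_cases hg : g = 0
  · refine absurd ?_ hne
    have : f = 0 := by
      ext y
      have := hrel y
      simpa [hg, hs0] using this
    simp [this, hg]
  · obtain ⟨y, hy⟩ : ∃ y, g y ≠ 0 := by
      by_contra! h
      exact hg (LinearMap.ext h)
    refine ⟨-((g y)⁻¹ * f y), ?_⟩
    have h := hrel y
    rw [neg_smul, mul_smul, eq_neg_of_add_eq_zero_left h, smul_neg, neg_neg, inv_smul_smul₀ hy]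

end HopfIntegral

/-- Let `H` be a finite-dimensional Hopf algebra over a field `F` and let `w ∈ H` be
such that the augmentation ideal `ω(H) = ker ε` equals the right ideal
`wH = {w·h : h ∈ H}`.  Then `ω(H)` also equals the left ideal `Hw = {h·w : h ∈ H}`. -/
theorem augmentation_eq_left_ideal_of_eq_right_ideal
    (F H : Type*) [Field F] [Ring H] [HopfAlgebra F H] [FiniteDimensional F H]
    (w : H)
    (hw : {x : H | Coalgebra.counit (R := F) x = 0} = Set.range (fun h : H => w * h)) :
    {x : H | Coalgebra.counit (R := F) x = 0} = Set.range (fun h : H => h * w) := by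
  let ε : H →ₗ[F] F := Coalgebra.counit
  let r : H →ₗ[F] H := LinearMap.mulRight F w
  have hw0 : ε w = 0 := by
    have : w ∈ {x : H | Coalgebra.counit (R := F) x = 0} := by rw [hw]; exact ⟨1, mul_one w⟩
    exact this
  have hint (t : H) (ht : t * w = 0) (x : H) : t * x = Coalgebra.counit (R := F) x • t := by
    have hx : x - algebraMap F H (ε x) ∈ {x : H | Coalgebra.counit (R := F) x = 0} := by
      change ε (x - algebraMap F H (ε x)) = 0
      rw [map_sub, sub_eq_zero]
      exact (Bialgebra.counit_algebraMap (ε x)).symm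
    rw [hw] at hx
    obtain ⟨h, hh : w * h = _⟩ := hx
    have : t * (x - algebraMap F H (ε x)) = 0 := by rw [← hh, ← mul_assoc, ht, zero_mul]
    rw [mul_sub, sub_eq_zero] at this
    rw [this, ← Algebra.commutes, ← Algebra.smul_def]
  have hker : Module.finrank F (LinearMap.ker r) ≤ 1 := by
    rcases subsingleton_or_nontrivial (LinearMap.ker r) with _ | _
    · rw [Module.finrank_zero_of_subsingleton]
      exact zero_le_one
    · obtain ⟨⟨s, hs⟩, hs0⟩ := exists_ne (0 : LinearMap.ker r)
      refine finrank_le_one ⟨s, hs⟩ fun ⟨t, ht⟩ => ?_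
      obtain ⟨c, hc⟩ := HopfIntegral.exists_smul_eq (hint s hs) (hint t ht)
        (fun h => hs0 (Subtype.ext h))
      exact ⟨c, Subtype.ext hc⟩
  have hεsurj : LinearMap.range ε = ⊤ := LinearMap.range_eq_top.2 fun c =>
    ⟨algebraMap F H c, by simp [ε]⟩
  have h1 := r.finrank_range_add_finrank_ker
  have h2 := ε.finrank_range_add_finrank_ker
  rw [hεsurj, finrank_top, Module.finrank_self] at h2
  have hle : LinearMap.range r ≤ LinearMap.ker ε := by
    rintro _ ⟨h, rfl⟩
    have : ε (h * w) = ε h * ε w := Bialgebra.counit_mul h w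
    simp [r, this, hw0]
  have heq : LinearMap.range r = LinearMap.ker ε :=
    Submodule.eq_of_le_of_finrank_le hle (by omega)
  exact (congrArg (fun V : Submodule F H => (V : Set H)) heq).symm
end
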